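/- For every k ≤ n/2 and every S = {s₁ < s₂ < ⋯ < s_{|S|}} in H_{n,k}, the squared ℓ₂-norm of χ_{n,S} equals the product over i = 1,…,|S| of (s_i − 2i + 2)/(s_i − 2i + 1). -/

import Mathlib

/-!
The vector `χ_{n,S}` is harmonic, i.e. annihilated by the down operator `D`, and its norm is
computed along the recursion on `n`. If `n + 1 ∉ S`, passing from `n` to `n + 1` changes
nothing. If `n + 1 ∈ S`, put `T = S ∖ {n + 1}`, `d = |T|` and `f = χ_{n,T}`, so that
`χ_{n+1,S}` consists of the two blocks `f` and `-(U f) / (n - 2d)`, with `U` the up operator.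
The commutation relation `D U - U D = n - 2d` on the slice of weight `d` (`down_up`) and
`D f = 0` give `D U f = (n - 2d) f`. This shows that `χ_{n+1,S}` is again harmonic and, as `U`
is the transpose of `D`, that `‖U f‖² = (n - 2d) ‖f‖²`. Hence the squared norm is multiplied by
`1 + 1 / (n - 2d)`, which is the factor of the largest element `s = n + 1`; the condition
`s ≥ 2(d + 1)` makes `n - 2d` positive. `chiExt_spec` carries both facts through the induction.

To avoid slices indexed by varying weights, vectors are extended by zero to the whole cube
`{0,1}^n` (`chiExt`), where `up` and `down` act through the covering relation `Cov`.
-/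

open scoped Classical

/-- The slice `C([n],k)`: vectors in `{0,1}^n` with exactly `k` ones. -/
abbrev Slice (n k : ℕ) :=
  {x : Fin n → Bool // (Finset.univ.filter fun i => x i = true).card = k}

/-- The up operator `P↑_{n,k}`. -/
noncomputable def upOp (n k : ℕ) : Matrix (Slice n (k + 1)) (Slice n k) ℝ :=
  Matrix.of fun x y => if ∀ i, y.1 i = true → x.1 i = true then (1 : ℝ) else 0

/-- The down operator `P↓_{n,k}` (the transpose of `P↑_{n,k-1}`); it is the zero
matrix for `k = 0`. -/
noncomputable def downOp (n k : ℕ) : Matrix (Slice n (k - 1)) (Slice n k) ℝ :=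
  Matrix.of fun x y => if 0 < k ∧ ∀ i, x.1 i = true → y.1 i = true then (1 : ℝ) else 0

noncomputable def upPathAux (n i : ℕ) : (d : ℕ) → Matrix (Slice n (i + d)) (Slice n i) ℝ
  | 0 => show Matrix (Slice n (i + 0)) (Slice n i) ℝ from (1 : Matrix (Slice n i) (Slice n i) ℝ)
  | d + 1 => upOp n (i + d) * upPathAux n i d

/-- The iterated up operator `P↑_{n,i,k} = P↑_{n,k-1} ⋯ P↑_{n,i}`. -/
noncomputable def upPath (n i k : ℕ) : Matrix (Slice n k) (Slice n i) ℝ :=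
  if h : i ≤ k then
    cast (by rw [Nat.add_sub_cancel' h]) (upPathAux n i (k - i))
  else 0

/-- `P∨_{n,k} = P↑_{n,k-1} P↓_{n,k}`. -/
noncomputable def upDown (n k : ℕ) : Matrix (Slice n k) (Slice n k) ℝ :=
  if h : 1 ≤ k then
    cast (by rw [Nat.sub_add_cancel h]) (upOp n (k - 1) * downOp n k)
  else 0

/-- `P∧_{n,k} = P↓_{n,k+1} P↑_{n,k}`. -/
noncomputable def downUp (n k : ℕ) : Matrix (Slice n k) (Slice n k) ℝ :=
  downOp n (k + 1) * upOp n k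

/-- `S ∈ H_{n,k}`: `S ⊆ {1,…,n}`, `|S| ≤ k`, and the `j`-th smallest element
(1-indexed) is at least `2j`. -/
def IsH (n k : ℕ) (S : Finset ℕ) : Prop :=
  S ⊆ Finset.Icc 1 n ∧ S.card ≤ k ∧
    ∀ j, j < S.card → 2 * (j + 1) ≤ (S.sort (· ≤ ·)).getD j 0

lemma wcast_false {n : ℕ} (x : Fin (n + 1) → Bool) (h : ¬ x (Fin.last n) = true) :
    (Finset.univ.filter fun i : Fin n => x (Fin.castSucc i) = true).card
      = (Finset.univ.filter fun i : Fin (n + 1) => x i = true).card := by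
  rw [Finset.card_filter, Finset.card_filter, Fin.sum_univ_castSucc]
  simp [h]

lemma wcast_true {n : ℕ} (x : Fin (n + 1) → Bool) (h : x (Fin.last n) = true) :
    (Finset.univ.filter fun i : Fin n => x (Fin.castSucc i) = true).card + 1
      = (Finset.univ.filter fun i : Fin (n + 1) => x i = true).card := by
  rw [Finset.card_filter, Finset.card_filter, Fin.sum_univ_castSucc]
  simp [h]

/-- Forgetting the last coordinate of `x` when it equals `0`. -/
def dropLast {n m : ℕ} (x : Slice (n + 1) m) (h : ¬ x.1 (Fin.last n) = true) : Slice n m :=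
  ⟨fun i => x.1 (Fin.castSucc i), by
    show (Finset.univ.filter fun i : Fin n => x.1 (Fin.castSucc i) = true).card = m
    rw [wcast_false x.1 h]; exact x.2⟩

/-- Forgetting the last coordinate of `x` when it equals `1`. -/
def dropLastT {n m : ℕ} (x : Slice (n + 1) m) (h : x.1 (Fin.last n) = true) : Slice n (m - 1) :=
  ⟨fun i => x.1 (Fin.castSucc i), by
    show (Finset.univ.filter fun i : Fin n => x.1 (Fin.castSucc i) = true).card = m - 1
    have h1 := wcast_true x.1 h
    have h2 := x.2
    omega⟩

/-- The vector `χ_{n,S}` on the slice `C([n],|S|)`, defined recursively. -/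
noncomputable def chi : (n : ℕ) → (S : Finset ℕ) → Slice n S.card → ℝ
  | 0, _ => fun _ => 1
  | n + 1, S =>
    if hS : n + 1 ∈ S then
      fun x =>
        if hx : x.1 (Fin.last n) = true then
          chi n (S.erase (n + 1)) ⟨(dropLastT x hx).1, by
            show (Finset.univ.filter fun i : Fin n => x.1 (Fin.castSucc i) = true).card
              = (S.erase (n + 1)).card
            rw [Finset.card_erase_of_mem hS]
            exact (dropLastT x hx).2⟩
        else
          -(∑ y : Slice n (S.erase (n + 1)).card,
              (if ∀ i, y.1 i = true → (dropLast x hx).1 i = true then (1 : ℝ) else 0) *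
                chi n (S.erase (n + 1)) y) / ((n : ℝ) + 1 - 2 * S.card + 1)
    else
      fun x =>
        if hx : x.1 (Fin.last n) = true then 0
        else chi n S (dropLast x hx)

/-- The basis vector `P↑_{n,|S|,k} χ_{n,S}` of `R^{C([n],k)}`. -/
noncomputable def basisVec (n k : ℕ) (S : Finset ℕ) : Slice n k → ℝ :=
  (upPath n S.card k).mulVec (chi n S)

/-- The Fourier coefficient `f̂(S)`, equal to `0` when `S ∉ H_{n,min{k,n-k}}`. -/
noncomputable def fourierSlice (n k : ℕ) (f : Slice n k → ℝ) (S : Finset ℕ) : ℝ :=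
  if IsH n (min k (n - k)) S then
    (∑ x, f x * basisVec n k S x) / Real.sqrt (∑ x, basisVec n k S x ^ 2)
  else 0

/-- The Hamming weight of `z ∈ {0,1}^t`. -/
def wt {t : ℕ} (z : Fin t → Bool) : ℕ :=
  (Finset.univ.filter fun i => z i = true).card

/-- The concatenation `x ∘ z ∈ {0,1}^n` of `x ∈ {0,1}^{n-t}` with `z ∈ {0,1}^t`
(with `z` occupying the last `t` coordinates). -/
def catFun (n t : ℕ) (x : Fin (n - t) → Bool) (z : Fin t → Bool) : Fin n → Bool :=
  fun i =>
    if h : (i : ℕ) < n - t then x ⟨i, h⟩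
    else if h2 : (i : ℕ) - (n - t) < t then z ⟨(i : ℕ) - (n - t), h2⟩
    else false

/-- The restriction `f_z : C([n-t], k-|z|) → ℝ`, `f_z(x) = f(x ∘ z)`; it is
(the everywhere-zero function on) the empty function when `|z| > k`. -/
noncomputable def restrict (n k t : ℕ) (f : Slice n k → ℝ) (z : Fin t → Bool) :
    Slice (n - t) (k - wt z) → ℝ :=
  fun x =>
    if h : (Finset.univ.filter fun i => catFun n t x.1 z i = true).card = k then
      f ⟨catFun n t x.1 z, h⟩
    else 0

/-- The Fourier coefficient `f̂_z(S)` of the restriction `f_z`. -/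
noncomputable def fourierSliceRestrict (n k t : ℕ) (f : Slice n k → ℝ) (z : Fin t → Bool)
    (S : Finset ℕ) : ℝ :=
  fourierSlice (n - t) (k - wt z) (restrict n k t f z) S

/-- The adjacency matrix `A_{n,k}` of the Johnson graph. -/
noncomputable def johnsonAdj (n k : ℕ) : Matrix (Slice n k) (Slice n k) ℝ :=
  Matrix.of fun x y =>
    if (Finset.univ.filter fun i => x.1 i ≠ y.1 i).card = 2 then (1 : ℝ) else 0

/-! ### Splitting off the last coordinate -/

/-- The vector `v ∘ b`, i.e. `v` with the last coordinate `b` appended. -/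
def ext {n : ℕ} (v : Fin n → Bool) (b : Bool) : Fin (n + 1) → Bool :=
  Fin.snoc (α := fun _ => Bool) v b

@[simp] lemma ext_last {n : ℕ} (v : Fin n → Bool) (b : Bool) : ext v b (Fin.last n) = b := by
  simp [ext]

@[simp] lemma ext_castSucc {n : ℕ} (v : Fin n → Bool) (b : Bool) (i : Fin n) :
    ext v b i.castSucc = v i := by
  simp [ext]

lemma exists_ext {n : ℕ} (w : Fin (n + 1) → Bool) : ∃ v b, w = ext v b :=
  ⟨Fin.init w, w (Fin.last n), by simp [ext]⟩

lemma sum_ext {n : ℕ} (F : (Fin (n + 1) → Bool) → ℝ) :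
    ∑ w, F w = ∑ v, F (ext v false) + ∑ v, F (ext v true) := by
  rw [← (Fin.snocEquiv fun _ : Fin (n + 1) => Bool).sum_comp, Fintype.sum_prod_type]
  simp only [Fintype.sum_bool]
  rw [add_comm]
  rfl

@[simp] lemma wt_ext_true {n : ℕ} (v : Fin n → Bool) : wt (ext v true) = wt v + 1 := by
  have := wcast_true (ext v true) (by simp)
  simp only [ext_castSucc] at this
  exact this.symm

@[simp] lemma wt_ext_false {n : ℕ} (v : Fin n → Bool) : wt (ext v false) = wt v := by
  have := wcast_false (ext v false) (by simp)
  simp only [ext_castSucc] at this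
  exact this.symm

/-! ### The up and down operators on the cube -/

/-- The covering relation of the Boolean cube: `v` arises from `y` by turning a single `0`
into a `1`. -/
def Cov {n : ℕ} (y v : Fin n → Bool) : Prop :=
  (∀ i, y i = true → v i = true) ∧ wt v = wt y + 1

lemma le_ext {n : ℕ} (y v : Fin n → Bool) (b c : Bool) :
    (∀ i, ext y b i = true → ext v c i = true) ↔
      (∀ i, y i = true → v i = true) ∧ (b = true → c = true) := by
  rw [Fin.forall_fin_succ']
  simp

lemma eq_of_le_of_wt {n : ℕ} {y v : Fin n → Bool} (h : ∀ i, y i = true → v i = true)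
    (hw : wt v = wt y) : y = v := by
  have hsub : (Finset.univ.filter fun i => y i = true) ⊆
      Finset.univ.filter fun i => v i = true := by
    intro i; simpa using h i
  have := Finset.eq_of_subset_of_card_le hsub hw.le
  funext i
  have hi := Finset.ext_iff.1 this i
  simp only [Finset.mem_filter, Finset.mem_univ, true_and] at hi
  exact Bool.eq_iff_iff.2 hi

@[simp] lemma cov_ext_same {n : ℕ} (y v : Fin n → Bool) (b : Bool) :
    Cov (ext y b) (ext v b) ↔ Cov y v := by
  unfold Cov; rw [le_ext]; cases b <;> simp

@[simp] lemma cov_ext_true_false {n : ℕ} (y v : Fin n → Bool) :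
    ¬ Cov (ext y true) (ext v false) := by
  unfold Cov; rw [le_ext]; simp

@[simp] lemma cov_ext_false_true {n : ℕ} (y v : Fin n → Bool) :
    Cov (ext y false) (ext v true) ↔ y = v := by
  unfold Cov; rw [le_ext]
  constructor
  · rintro ⟨h, hw⟩
    exact eq_of_le_of_wt h.1 (by simpa using hw)
  · rintro rfl; simp

/-- The up operator on functions on the whole cube `{0,1}^n`; on each slice it acts as `upOp`. -/
noncomputable def up {n : ℕ} (f : (Fin n → Bool) → ℝ) (v : Fin n → Bool) : ℝ :=
  ∑ y, if Cov y v then f y else 0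

/-- The down operator on functions on the whole cube, the transpose of `up`. -/
noncomputable def down {n : ℕ} (f : (Fin n → Bool) → ℝ) (y : Fin n → Bool) : ℝ :=
  ∑ v, if Cov y v then f v else 0

lemma up_add {n : ℕ} (f g : (Fin n → Bool) → ℝ) (v : Fin n → Bool) :
    up (fun w => f w + g w) v = up f v + up g v := by
  unfold up
  rw [← Finset.sum_add_distrib]
  exact Finset.sum_congr rfl fun y _ => by split_ifs <;> simp

lemma down_add {n : ℕ} (f g : (Fin n → Bool) → ℝ) (v : Fin n → Bool) :
    down (fun w => f w + g w) v = down f v + down g v := by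
  unfold down
  rw [← Finset.sum_add_distrib]
  exact Finset.sum_congr rfl fun y _ => by split_ifs <;> simp

lemma down_mul {n : ℕ} (c : ℝ) (f : (Fin n → Bool) → ℝ) (v : Fin n → Bool) :
    down (fun w => c * f w) v = c * down f v := by
  unfold down
  rw [Finset.mul_sum]
  exact Finset.sum_congr rfl fun y _ => by split_ifs <;> simp

lemma up_zero {n : ℕ} (v : Fin n → Bool) : up (fun _ => 0) v = 0 := by simp [up]

lemma down_zero {n : ℕ} (v : Fin n → Bool) : down (fun _ => 0) v = 0 := by simp [down]

lemma up_ext_false {n : ℕ} (f : (Fin (n + 1) → Bool) → ℝ) (v : Fin n → Bool) :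
    up f (ext v false) = up (fun w => f (ext w false)) v := by
  unfold up; rw [sum_ext]; simp

lemma up_ext_true {n : ℕ} (f : (Fin (n + 1) → Bool) → ℝ) (v : Fin n → Bool) :
    up f (ext v true) = f (ext v false) + up (fun w => f (ext w true)) v := by
  unfold up; rw [sum_ext]; simp

lemma down_ext_false {n : ℕ} (f : (Fin (n + 1) → Bool) → ℝ) (v : Fin n → Bool) :
    down f (ext v false) = down (fun w => f (ext w false)) v + f (ext v true) := by
  unfold down; rw [sum_ext]; simp

lemma down_ext_true {n : ℕ} (f : (Fin (n + 1) → Bool) → ℝ) (v : Fin n → Bool) :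
    down f (ext v true) = down (fun w => f (ext w true)) v := by
  unfold down; rw [sum_ext]; simp

lemma up_fin_zero (f : (Fin 0 → Bool) → ℝ) (v : Fin 0 → Bool) : up f v = 0 := by
  simp [up, Cov, wt]

lemma down_fin_zero (f : (Fin 0 → Bool) → ℝ) (v : Fin 0 → Bool) : down f v = 0 := by
  simp [down, Cov, wt]

lemma sum_up_mul {n : ℕ} (f g : (Fin n → Bool) → ℝ) :
    ∑ v, up f v * g v = ∑ v, f v * down g v := by
  simp only [up, down, Finset.sum_mul, Finset.mul_sum]
  rw [Finset.sum_comm]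
  exact Finset.sum_congr rfl fun y _ => Finset.sum_congr rfl fun v _ => by split_ifs <;> simp

/-- The `sl₂` commutation relation: `down ∘ up - up ∘ down` is multiplication by
`n - 2|v|`. -/
lemma down_up {n : ℕ} (f : (Fin n → Bool) → ℝ) (v : Fin n → Bool) :
    down (up f) v = up (down f) v + ((n : ℝ) - 2 * wt v) * f v := by
  induction n with
  | zero => simp [up_fin_zero, down_fin_zero, wt]
  | succ n ih =>
    obtain ⟨v, b, rfl⟩ := exists_ext v
    cases b
    · rw [down_ext_false, up_ext_false, up_ext_true]
      simp only [up_ext_false, down_ext_false, up_add, wt_ext_false]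
      have := ih (fun w => f (ext w false)) v
      change down (fun w => up (fun w => f (ext w false)) w) v =
        up (fun w => down (fun w => f (ext w false)) w) v + _ at this
      rw [this]
      push_cast
      ring
    · rw [down_ext_true, up_ext_true, down_ext_false]
      simp only [up_ext_true, down_ext_true, down_add, wt_ext_true]
      have := ih (fun w => f (ext w true)) v
      change down (fun w => up (fun w => f (ext w true)) w) v =
        up (fun w => down (fun w => f (ext w true)) w) v + _ at this
      rw [this]
      push_cast
      ring

/-! ### The vector `χ_{n,S}` on the cube -/

/-- The vector `χ_{n,S}` extended by zero from the slice `C([n],|S|)` to the whole cube. -/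
noncomputable def chiExt (n : ℕ) (S : Finset ℕ) (v : Fin n → Bool) : ℝ :=
  if h : wt v = S.card then chi n S ⟨v, h⟩ else 0

lemma sum_slice {n d : ℕ} (F : (Fin n → Bool) → ℝ) (hF : ∀ v, wt v ≠ d → F v = 0) :
    ∑ x : Slice n d, F x.1 = ∑ v, F v := by
  rw [← Finset.sum_subtype (Finset.univ.filter fun v : Fin n → Bool => wt v = d)
    (fun v => by rw [Finset.mem_filter]; exact and_iff_right (Finset.mem_univ v)) F]
  exact Finset.sum_subset (Finset.subset_univ _) fun v _ h => hF v (by simpa using h)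

lemma chiExt_val {n : ℕ} {S : Finset ℕ} (x : Slice n S.card) : chiExt n S x.1 = chi n S x :=
  dif_pos x.2

lemma sum_chi_sq (n : ℕ) (S : Finset ℕ) : ∑ x, chi n S x ^ 2 = ∑ v, chiExt n S v ^ 2 := by
  rw [← sum_slice (d := S.card) (fun v => chiExt n S v ^ 2)]
  · simp only [chiExt_val]
  · intro v hv
    simp [chiExt, hv]

lemma chiExt_notMem_true {n : ℕ} {S : Finset ℕ} (hS : n + 1 ∉ S) (v : Fin n → Bool) :
    chiExt (n + 1) S (ext v true) = 0 := by
  unfold chiExt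
  split_ifs
  · simp [chi, hS]
  · rfl

lemma chiExt_notMem_false {n : ℕ} {S : Finset ℕ} (hS : n + 1 ∉ S) (v : Fin n → Bool) :
    chiExt (n + 1) S (ext v false) = chiExt n S v := by
  unfold chiExt
  simp [chi, hS, dropLast]

lemma chiExt_mem_true {n : ℕ} {S : Finset ℕ} (hS : n + 1 ∈ S) (v : Fin n → Bool) :
    chiExt (n + 1) S (ext v true) = chiExt n (S.erase (n + 1)) v := by
  have h1 := Finset.card_erase_add_one hS
  unfold chiExt
  simp only [wt_ext_true, ← h1, add_left_inj]
  split_ifs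
  · simp [chi, hS, dropLastT]
  · rfl

lemma chiExt_mem_false {n : ℕ} {S : Finset ℕ} (hS : n + 1 ∈ S) (v : Fin n → Bool) :
    chiExt (n + 1) S (ext v false) =
      -1 / ((n : ℝ) - 2 * (S.erase (n + 1)).card) * up (chiExt n (S.erase (n + 1))) v := by
  have h1 := Finset.card_erase_add_one hS
  by_cases hv : wt v = S.card
  · have hc : (S.card : ℝ) = (S.erase (n + 1)).card + 1 := by exact_mod_cast h1.symm
    have key : up (chiExt n (S.erase (n + 1))) v = ∑ y : Slice n (S.erase (n + 1)).card,
        (if ∀ i, y.1 i = true → v i = true then (1 : ℝ) else 0) *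
          chi n (S.erase (n + 1)) y := by
      unfold up
      rw [← sum_slice (d := (S.erase (n + 1)).card)]
      · refine Finset.sum_congr rfl fun y _ => ?_
        have hy : wt y.1 = (S.erase (n + 1)).card := y.2
        have : Cov y.1 v ↔ ∀ i, y.1 i = true → v i = true := by
          unfold Cov; rw [hy, hv, h1]; simp
        simp only [this, chiExt_val]
        split_ifs <;> simp
      · intro y hy
        simp [chiExt, hy]
    rw [key, chiExt, dif_pos (by rw [wt_ext_false, hv])]
    simp only [chi, hS, dropLast]
    rw [hc]
    simp
    ring
  -- Both sides vanish: `up` moves the support from weight `|S| - 1` to weight `|S|`.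
  · have key : up (chiExt n (S.erase (n + 1))) v = 0 := by
      refine Finset.sum_eq_zero fun y _ => ?_
      split_ifs with h
      · exact dif_neg fun h2 => hv (by rw [h.2, h2, h1])
      · rfl
    rw [key, mul_zero]
    exact dif_neg (by simpa using hv)

/-! ### Harmonicity and the norm -/

lemma sort_eq_append {n : ℕ} {S : Finset ℕ} (hS : n + 1 ∈ S) (hsub : S ⊆ Finset.Icc 1 (n + 1)) :
    S.sort (· ≤ ·) = (S.erase (n + 1)).sort (· ≤ ·) ++ [n + 1] := by
  refine List.Perm.eq_of_pairwise' (r := (· ≤ ·)) (Finset.pairwise_sort _ _) ?_ ?_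
  · rw [List.pairwise_append]
    refine ⟨Finset.pairwise_sort _ _, by simp, ?_⟩
    intro a ha b hb
    rw [Finset.mem_sort] at ha
    have := Finset.mem_Icc.1 (hsub (Finset.mem_of_mem_erase ha))
    simp at hb
    omega
  · rw [List.perm_ext_iff_of_nodup (Finset.sort_nodup _ _)]
    · intro a
      simp only [Finset.mem_sort, List.mem_append, Finset.mem_erase, List.mem_singleton]
      by_cases h : a = n + 1 <;> simp [h, hS]
    · rw [List.nodup_append]
      refine ⟨Finset.sort_nodup _ _, by simp, ?_⟩
      intro a ha b hb
      rw [Finset.mem_sort] at ha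
      simp at hb
      rw [hb]
      exact Finset.ne_of_mem_erase ha

/-- The two facts proved together by induction on `n`: `χ_{n,S}` is harmonic, and its squared
norm is the stated product. -/
lemma chiExt_spec (n : ℕ) (S : Finset ℕ) (hsub : S ⊆ Finset.Icc 1 n)
    (hj : ∀ j, j < S.card → 2 * (j + 1) ≤ (S.sort (· ≤ ·)).getD j 0) :
    (∀ v, down (chiExt n S) v = 0) ∧
    ∑ v, chiExt n S v ^ 2 = ∏ j ∈ Finset.range S.card,
          ((((S.sort (· ≤ ·)).getD j 0 : ℝ) - 2 * (j + 1) + 2) /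
            (((S.sort (· ≤ ·)).getD j 0 : ℝ) - 2 * (j + 1) + 1)) := by
  induction n generalizing S with
  | zero =>
    obtain rfl : S = ∅ := by simpa using hsub
    refine ⟨fun v => down_fin_zero _ v, ?_⟩
    simp [chiExt, chi, wt]
  | succ n ih =>
    by_cases hS : n + 1 ∈ S
    · have h1 := Finset.card_erase_add_one hS
      have hsort := sort_eq_append hS hsub
      set T := S.erase (n + 1) with hT
      have hlen : (T.sort (· ≤ ·)).length = T.card := Finset.length_sort _
      have hget : ∀ j, j < T.card →
          (S.sort (· ≤ ·)).getD j 0 = (T.sort (· ≤ ·)).getD j 0 := by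
        intro j hjT
        rw [hsort, List.getD_append _ _ _ _ (by rwa [hlen])]
      have hgetlast : (S.sort (· ≤ ·)).getD T.card 0 = n + 1 := by
        rw [hsort, List.getD_append_right _ _ _ _ (by rw [hlen]), hlen]
        simp
      have hTsub : T ⊆ Finset.Icc 1 n := by
        intro a ha
        have h2 := Finset.mem_Icc.1 (hsub (Finset.mem_of_mem_erase ha))
        have h3 := Finset.ne_of_mem_erase ha
        exact Finset.mem_Icc.2 (by omega)
      obtain ⟨ihD, ihN⟩ := ih T hTsub fun j hjT => by
        rw [← hget j hjT]; exact hj j (by omega)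
      have hpos : (0 : ℝ) < (n : ℝ) - 2 * T.card := by
        have := hj T.card (by omega)
        rw [hgetlast] at this
        have : 2 * T.card + 1 ≤ n := by omega
        have : (2 * T.card + 1 : ℝ) ≤ n := by exact_mod_cast this
        linarith
      have hDU : ∀ v, down (up (chiExt n T)) v = ((n : ℝ) - 2 * T.card) * chiExt n T v := by
        intro v
        rw [down_up, funext ihD, up_zero, zero_add]
        by_cases hv : wt v = T.card
        · rw [hv]
        · simp [chiExt, hv]
      constructor
      · intro v
        obtain ⟨v, b, rfl⟩ := exists_ext v
        cases b
        · rw [down_ext_false]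
          simp only [chiExt_mem_false hS, chiExt_mem_true hS, ← hT, down_mul]
          have := hDU v
          change down (fun w => up (chiExt n T) w) v = _ at this
          rw [this]
          field_simp
          ring
        · rw [down_ext_true]
          simp only [chiExt_mem_true hS]
          exact ihD v
      · have hU : ∑ v, up (chiExt n T) v ^ 2 =
            ((n : ℝ) - 2 * T.card) * ∑ v, chiExt n T v ^ 2 := by
          simp only [sq (up _ _)]
          rw [sum_up_mul, Finset.mul_sum]
          exact Finset.sum_congr rfl fun v _ => by rw [hDU]; ring
        rw [sum_ext]
        simp only [chiExt_mem_false hS, chiExt_mem_true hS, ← hT, mul_pow]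
        rw [← Finset.mul_sum, hU, ← h1, Finset.prod_range_succ]
        have hprod : ∏ j ∈ Finset.range T.card,
            ((((S.sort (· ≤ ·)).getD j 0 : ℝ) - 2 * (j + 1) + 2) /
              (((S.sort (· ≤ ·)).getD j 0 : ℝ) - 2 * (j + 1) + 1)) =
            ∑ v, chiExt n T v ^ 2 := by
          rw [ihN]
          exact Finset.prod_congr rfl fun j hj' => by rw [hget j (Finset.mem_range.1 hj')]
        rw [hprod, hgetlast]
        push_cast
        have e1 : (n : ℝ) + 1 - 2 * (T.card + 1) + 1 = n - 2 * T.card := by ring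
        have e2 : (n : ℝ) + 1 - 2 * (T.card + 1) + 2 = n - 2 * T.card + 1 := by ring
        rw [e1, e2]
        field_simp
        ring
    · have hSsub : S ⊆ Finset.Icc 1 n := by
        intro a ha
        have h2 := Finset.mem_Icc.1 (hsub ha)
        have h3 : a ≠ n + 1 := fun h => hS (h ▸ ha)
        exact Finset.mem_Icc.2 (by omega)
      obtain ⟨ihD, ihN⟩ := ih S hSsub hj
      constructor
      · intro v
        obtain ⟨v, b, rfl⟩ := exists_ext v
        cases b
        · rw [down_ext_false]
          simp only [chiExt_notMem_false hS, chiExt_notMem_true hS, add_zero]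
          exact ihD v
        · rw [down_ext_true]
          simp only [chiExt_notMem_true hS]
          exact down_zero v
      · rw [sum_ext, ← ihN]
        simp [chiExt_notMem_false hS, chiExt_notMem_true hS]

/-- For `k ≤ n/2` and `S ∈ H_{n,k}`,
`‖χ_{n,S}‖₂² = ∏_{i=1}^{|S|} (s_i - 2i + 2)/(s_i - 2i + 1)`. -/
theorem stmt10 (n k : ℕ) (hk : 2 * k ≤ n) (S : Finset ℕ) (hS : IsH n k S) :
    ∑ x, (chi n S x) ^ 2
      = ∏ j ∈ Finset.range S.card,
          ((((S.sort (· ≤ ·)).getD j 0 : ℝ) - 2 * (j + 1) + 2) /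
            (((S.sort (· ≤ ·)).getD j 0 : ℝ) - 2 * (j + 1) + 1)) := by
  rw [sum_chi_sq]
  exact (chiExt_spec n S hS.1 hS.2.2).2
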